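/- arXiv:1806.05494 — 11 statements merged into one kernel-verified Lean document; each statement's English description precedes it below -/
import Mathlib

section
/- Fix quaternions u₁ and u₂ over ℝ. The linear operator A on the quaternions defined by A u = u₁ * (star u) * u₂ has Hermitian adjoint A⁺ v = u₂ * (star v) * u₁; that is, for all quaternions u and v, ⟪u₁ * (star u) * u₂, v⟫ = ⟪u, u₂ * (star v) * u₁⟫. -/
open Quaternion RealInnerProductSpace

theorem quaternion_triple_adjoint (u₁ u₂ : ℍ) :
    ∀ u v : ℍ, ⟪u₁ * star u * u₂, v⟫ = ⟪u, u₂ * star v * u₁⟫ := by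
  intro u v
  -- Both sides are real parts of quaternion products, hence polynomials in the coordinates.
  simp only [Quaternion.inner_def, Quaternion.re_mul, Quaternion.imI_mul, Quaternion.imJ_mul,
    Quaternion.imK_mul, Quaternion.re_star, Quaternion.imI_star, Quaternion.imJ_star,
    Quaternion.imK_star]
  ring
end

section
/- For any quaternions u₁, u, u₂ over ℝ, the triple anticommutator {u₁, u, u₂} = (u₁ * (star u) * u₂ + u₂ * (star u) * u₁) / 2 equals the linear combination ⟪u₁, u⟫ • u₂ - ⟪u₁, u₂⟫ • u + ⟪u, u₂⟫ • u₁. -/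
open Quaternion RealInnerProductSpace

theorem quaternion_triple_anticommutator (u₁ u u₂ : ℍ) :
    (u₁ * star u * u₂ + u₂ * star u * u₁) / 2 =
      ⟪u₁, u⟫ • u₂ - ⟪u₁, u₂⟫ • u + ⟪u, u₂⟫ • u₁ := by
  -- Clearing the denominator leaves a polynomial identity in the twelve real coordinates.
  have h2 : (2 : ℍ) ≠ 0 := fun h => two_ne_zero (α := ℝ) <|
    congrArg (fun q : ℍ => q.re) h
  rw [div_eq_iff h2, mul_two]
  simp only [Quaternion.inner_def]
  ext <;> simp <;> ring
end

section
/- For any quaternions u₁, u, u₂ over ℝ, the triple commutator [u₁, u, u₂] = (u₁ * (star u) * u₂ - u₂ * (star u) * u₁) / 2 equals ⟪cross u₁ u, u₂⟫ • 1 - (u₁.re) • (cross u u₂) + (u.re) • (cross u₁ u₂) - (u₂.re) • (cross u₁ u), where cross a b := (a * b - b * a) / 2 and a.re denotes the real part of a. -/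
open Quaternion RealInnerProductSpace

/-- The cross product of two quaternions. -/
noncomputable def cross (a b : ℍ) : ℍ := (a * b - b * a) / 2

/-- Componentwise `simp` lemmas are available for real scalar multiples, but not for quaternion
division. -/
lemma div_two_eq_smul (a : ℍ) : a / 2 = (2⁻¹ : ℝ) • a := by
  have h : (2 : ℍ) = ((2 : ℝ) : ℍ) := by norm_cast
  rw [div_eq_mul_inv, h, ← Quaternion.coe_inv, Quaternion.mul_coe_eq_smul]

theorem quaternion_triple_commutator (u₁ u u₂ : ℍ) :
    (u₁ * star u * u₂ - u₂ * star u * u₁) / 2 =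
      ⟪cross u₁ u, u₂⟫ • (1 : ℍ) - u₁.re • cross u u₂ + u.re • cross u₁ u₂
        - u₂.re • cross u₁ u := by
  simp only [cross, div_two_eq_smul, Quaternion.inner_def]
  ext <;> simp <;> ring
end

section
/- For any quaternions u₁, u, u₂ over ℝ, the triple product with conjugate central factor decomposes as u₁ * (star u) * u₂ = (⟪u₁, u⟫ • u₂ - ⟪u₁, u₂⟫ • u + ⟪u, u₂⟫ • u₁) + (⟪cross u₁ u, u₂⟫ • 1 - (u₁.re) • (cross u u₂) + (u.re) • (cross u₁ u₂) - (u₂.re) • (cross u₁ u)), i.e. into the sum of the triple anticommutator and the triple commutator in closed form (the associator term vanishing for quaternions). -/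
open Quaternion RealInnerProductSpace

/-- Real scalar form of the cross product, whose coordinates can be read off without
computing a quaternion inverse. -/
lemma cross_eq_smul (a b : ℍ) : cross a b = (2⁻¹ : ℝ) • (a * b - b * a) := by
  have h : ((2 : ℝ) : ℍ) = 2 := by norm_cast
  rw [cross, div_eq_mul_inv, ← h, ← Quaternion.coe_inv, Quaternion.mul_coe_eq_smul]

-- Both sides are polynomial in the twelve real coordinates, so the identity is checked
-- component by component.
theorem quaternion_triple_product_decomposition (u₁ u u₂ : ℍ) :
    u₁ * star u * u₂ =
      (⟪u₁, u⟫ • u₂ - ⟪u₁, u₂⟫ • u + ⟪u, u₂⟫ • u₁) +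
        (⟪cross u₁ u, u₂⟫ • (1 : ℍ) - u₁.re • cross u u₂ + u.re • cross u₁ u₂
          - u₂.re • cross u₁ u) := by
  simp only [cross_eq_smul, Quaternion.inner_def]
  ext <;> simp <;> ring
end

section
/- For any quaternions u₁, u, u₂ over ℝ, the triple commutator [u₁, u, u₂] = (u₁ * (star u) * u₂ - u₂ * (star u) * u₁) / 2 is orthogonal to each of its three arguments: ⟪[u₁, u, u₂], u₁⟫ = 0, ⟪[u₁, u, u₂], u⟫ = 0, and ⟪[u₁, u, u₂], u₂⟫ = 0. -/
open Quaternion RealInnerProductSpace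

theorem quaternion_commutator_orthogonal_args (u₁ u u₂ : ℍ) :
    ⟪(u₁ * star u * u₂ - u₂ * star u * u₁) / 2, u₁⟫ = 0 ∧
    ⟪(u₁ * star u * u₂ - u₂ * star u * u₁) / 2, u⟫ = 0 ∧
    ⟪(u₁ * star u * u₂ - u₂ * star u * u₁) / 2, u₂⟫ = 0 := by
  -- Quaternion division by `2` is real scaling by `2⁻¹`, which pulls out of the inner product;
  -- in coordinates each remaining claim is a polynomial identity.
  have half (x : ℍ) : x / 2 = (2⁻¹ : ℝ) • x := by
    have two : (2 : ℍ) = ((2 : ℝ) : ℍ) := rfl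
    rw [two, div_eq_mul_inv, ← Quaternion.coe_inv, Quaternion.mul_coe_eq_smul]
  simp only [half, real_inner_smul_left, Quaternion.inner_def, Quaternion.re_mul,
    Quaternion.imI_mul, Quaternion.imJ_mul, Quaternion.imK_mul, Quaternion.re_sub,
    Quaternion.imI_sub, Quaternion.imJ_sub, Quaternion.imK_sub, Quaternion.re_star,
    Quaternion.imI_star, Quaternion.imJ_star, Quaternion.imK_star]
  refine ⟨?_, ?_, ?_⟩ <;> ring
end

section
/- For any quaternions u₁, u, u₂, u₃ over ℝ, the mixed product of the triple commutator is anticommutative: ⟪[u₁, u, u₂], u₃⟫ = -⟪[u₃, u, u₂], u₁⟫. -/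
open Quaternion RealInnerProductSpace

/-- Division by `2` is real scaling, which can be pulled out of the inner product. -/
lemma inner_div_two (a b : ℍ) : ⟪a / 2, b⟫ = (1 / 2 : ℝ) * ⟪a, b⟫ := by
  have h : a / 2 = (1 / 2 : ℝ) • a := by
    have h2 : (2 : ℍ) ≠ 0 := by
      exact_mod_cast (Quaternion.coe_injective (R := ℝ)).ne (two_ne_zero' ℝ)
    rw [div_eq_iff h2, smul_mul_assoc, mul_two, ← two_smul ℝ a, smul_smul]
    norm_num
  rw [h, real_inner_smul_left]

theorem quaternion_mixed_product_anticomm (u₁ u u₂ u₃ : ℍ) :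
    ⟪(u₁ * star u * u₂ - u₂ * star u * u₁) / 2, u₃⟫ =
      -⟪(u₃ * star u * u₂ - u₂ * star u * u₃) / 2, u₁⟫ := by
  -- The claim becomes a polynomial identity in the coordinates. It holds because
  -- `star u * u₂ + star u₂ * u` and `u₂ * star u + u * star u₂` are the same real scalar.
  rw [inner_div_two, inner_div_two]
  simp only [inner_def, Quaternion.re_mul, Quaternion.re_sub, Quaternion.imI_sub,
    Quaternion.imJ_sub, Quaternion.imK_sub, Quaternion.imI_mul, Quaternion.imJ_mul,
    Quaternion.imK_mul, Quaternion.re_star, Quaternion.imI_star, Quaternion.imJ_star,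
    Quaternion.imK_star]
  ring
end

section
/- For any quaternions u₁, u, u₂ over ℝ, the squared norm of the triple anticommutator satisfies ‖{u₁, u, u₂}‖² = ‖u₁‖² * ‖u‖² * ‖u₂‖² - det G, where G is the 3×3 Gram matrix with entries G = !![⟪u₁,u₁⟫, ⟪u₁,u⟫, ⟪u₁,u₂⟫; ⟪u₁,u⟫, ⟪u,u⟫, ⟪u,u₂⟫; ⟪u₁,u₂⟫, ⟪u,u₂⟫, ⟪u₂,u₂⟫]. -/
open Quaternion RealInnerProductSpace Matrix

/-! The triple anticommutator is a real linear combination of its arguments,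
`{u₁, u, u₂} = ⟪u₁, u⟫ u₂ + ⟪u, u₂⟫ u₁ - ⟪u₁, u₂⟫ u`, which follows from the polarized norm
identity `x * star y + y * star x = 2 ⟪x, y⟫`. Expanding the squared norm of the right-hand side
bilinearly gives exactly the terms of `‖u₁‖² ‖u‖² ‖u₂‖² - det G`. -/

lemma quaternion_mul_star_add (x y : ℍ) :
    x * star y + y * star x = ((2 * ⟪x, y⟫ : ℝ) : ℍ) := by
  ext <;> simp [Quaternion.inner_def] <;> ring

lemma quaternion_star_mul_add (x y : ℍ) :
    star x * y + star y * x = ((2 * ⟪x, y⟫ : ℝ) : ℍ) := by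
  ext <;> simp [Quaternion.inner_def] <;> ring

lemma quaternion_anticommutator_eq (u₁ u u₂ : ℍ) :
    (u₁ * star u * u₂ + u₂ * star u * u₁) / 2 = ⟪u₁, u⟫ • u₂ + ⟪u, u₂⟫ • u₁ - ⟪u₁, u₂⟫ • u := by
  have two_ne : (2 : ℍ) ≠ 0 := by
    rw [← one_add_one_eq_two]
    intro h
    have h_re := congrArg (fun q : ℍ => q.re) h
    simp only [Quaternion.re_add, Quaternion.re_one, Quaternion.re_zero] at h_re
    norm_num at h_re
  rw [div_eq_iff two_ne]
  -- Move `star` from `u` to `u₁`, then from `u₁` to `u₂`; the two remaining products combine.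
  have split : u₁ * star u * u₂ + u₂ * star u * u₁ =
      (u₁ * star u + u * star u₁) * u₂ - u * (star u₁ * u₂ + star u₂ * u₁)
        + (u * star u₂ + u₂ * star u) * u₁ := by
    noncomm_ring
  rw [split, quaternion_mul_star_add, quaternion_mul_star_add, quaternion_star_mul_add,
    Quaternion.coe_mul_eq_smul, Quaternion.mul_coe_eq_smul, Quaternion.coe_mul_eq_smul, mul_two]
  module

theorem quaternion_anticommutator_norm_sq (u₁ u u₂ : ℍ) :
    ‖(u₁ * star u * u₂ + u₂ * star u * u₁) / 2‖ ^ 2 =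
      ‖u₁‖ ^ 2 * ‖u‖ ^ 2 * ‖u₂‖ ^ 2 -
        Matrix.det !![⟪u₁, u₁⟫, ⟪u₁, u⟫, ⟪u₁, u₂⟫;
                      ⟪u₁, u⟫, ⟪u, u⟫, ⟪u, u₂⟫;
                      ⟪u₁, u₂⟫, ⟪u, u₂⟫, ⟪u₂, u₂⟫] := by
  rw [quaternion_anticommutator_eq, Matrix.det_fin_three]
  simp only [← real_inner_self_eq_norm_sq, inner_add_left, inner_add_right, inner_sub_left,
    inner_sub_right, real_inner_smul_left, real_inner_smul_right, real_inner_comm u₁ u,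
    real_inner_comm u₁ u₂, real_inner_comm u u₂]
  simp
  ring
end

section
/- For any quaternions u₁, u, u₂ over ℝ, the squared norm of the triple commutator equals the Gram determinant of the three arguments: ‖[u₁, u, u₂]‖² = det G, where G is the 3×3 Gram matrix with entries G = !![⟪u₁,u₁⟫, ⟪u₁,u⟫, ⟪u₁,u₂⟫; ⟪u₁,u⟫, ⟪u,u⟫, ⟪u,u₂⟫; ⟪u₁,u₂⟫, ⟪u,u₂⟫, ⟪u₂,u₂⟫]. -/
open Quaternion RealInnerProductSpace Matrix

/-!
Each of the four real coordinates of `(u₁ * star u * u₂ - u₂ * star u * u₁) / 2` is, up to sign, a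
3×3 minor of the 3×4 coordinate matrix of `u₁, u, u₂`. The sum of their squares is
therefore the Gram determinant by the Cauchy–Binet formula, which in coordinates is a polynomial
identity over `ℝ`.
-/

theorem inner_eq_coord (a b : ℍ) :
    ⟪a, b⟫ = a.re * b.re + a.imI * b.imI + a.imJ * b.imJ + a.imK * b.imK := by
  rw [Quaternion.inner_def, Quaternion.re_mul]
  simp

theorem quaternion_commutator_norm_sq (u₁ u u₂ : ℍ) :
    ‖(u₁ * star u * u₂ - u₂ * star u * u₁) / 2‖ ^ 2 =
      Matrix.det !![⟪u₁, u₁⟫, ⟪u₁, u⟫, ⟪u₁, u₂⟫;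
                    ⟪u₁, u⟫, ⟪u, u⟫, ⟪u, u₂⟫;
                    ⟪u₁, u₂⟫, ⟪u, u₂⟫, ⟪u₂, u₂⟫] := by
  have h2 : ‖(2 : ℍ)‖ = 2 := by
    have h := Quaternion.norm_coe (2 : ℝ)
    rwa [Real.norm_ofNat] at h
  rw [norm_div, div_pow, h2, sq ‖_‖, ← Quaternion.normSq_eq_norm_mul_self, Matrix.det_fin_three]
  simp only [inner_eq_coord]
  simp [Quaternion.normSq_def']
  ring
end

section
/- For any quaternions u₁, u, u₂ over ℝ, the squared norms of the triple anticommutator and the triple commutator add up to the product of the squared norms of the arguments: ‖{u₁, u, u₂}‖² + ‖[u₁, u, u₂]‖² = ‖u₁‖² * ‖u‖² * ‖u₂‖². -/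
open Quaternion RealInnerProductSpace

theorem quaternion_pythagoras_triple (u₁ u u₂ : ℍ) :
    ‖(u₁ * star u * u₂ + u₂ * star u * u₁) / 2‖ ^ 2 +
      ‖(u₁ * star u * u₂ - u₂ * star u * u₁) / 2‖ ^ 2 =
        ‖u₁‖ ^ 2 * ‖u‖ ^ 2 * ‖u₂‖ ^ 2 := by
  -- Both products have norm `‖u₁‖ * ‖u‖ * ‖u₂‖`, so the claim is the parallelogram law for them.
  have h := parallelogram_law_with_norm ℝ (u₁ * star u * u₂) (u₂ * star u * u₁)
  have h2 : ‖(2 : ℍ)‖ = 2 := by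
    exact (Quaternion.norm_coe (2 : ℝ)).trans (by norm_num)
  have ha : ‖u₁ * star u * u₂‖ = ‖u₁‖ * ‖u‖ * ‖u₂‖ := by
    rw [norm_mul, norm_mul, Quaternion.norm_star]
  have hb : ‖u₂ * star u * u₁‖ = ‖u₁‖ * ‖u‖ * ‖u₂‖ := by
    rw [norm_mul, norm_mul, Quaternion.norm_star]; ring
  rw [ha, hb] at h
  rw [norm_div, norm_div, h2]
  linear_combination h / 4
end

section
/- For any quaternions u₁, u, u₂ over ℝ, the Gram determinant of the imaginary parts equals the square of the scalar triple product: det G' = ⟪cross u₁ u, u₂⟫², where G' is the 3×3 Gram matrix of the vectors u₁' = u₁ - (u₁.re) • 1, u' = u - (u.re) • 1, u₂' = u₂ - (u₂.re) • 1, i.e. G' = !![⟪u₁',u₁'⟫, ⟪u₁',u'⟫, ⟪u₁',u₂'⟫; ⟪u₁',u'⟫, ⟪u',u'⟫, ⟪u',u₂'⟫; ⟪u₁',u₂'⟫, ⟪u',u₂'⟫, ⟪u₂',u₂'⟫], and cross a b := (a * b - b * a) / 2. -/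
/-!
In the coordinates `(imI, imJ, imK)`, the Gram matrix of the imaginary parts is `A * Aᵀ`, where the
rows of `A` are the three imaginary parts, and `⟪cross u₁ u, u₂⟫` is `det A`: `cross` is the
Euclidean cross product of the imaginary parts and has zero real part. The lemmas
`inner_imaginary_parts` and `inner_cross` express
these inner products in coordinates; the theorem is then the polynomial identity
`det (A * Aᵀ) = (det A) ^ 2`.
-/


open Quaternion RealInnerProductSpace Matrix

theorem inner_imaginary_parts (a b : ℍ) :
    ⟪a - a.re • (1 : ℍ), b - b.re • (1 : ℍ)⟫ =
      a.imI * b.imI + a.imJ * b.imJ + a.imK * b.imK := by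
  simp [Quaternion.inner_def, Quaternion.re_mul]

theorem inner_cross (a b c : ℍ) :
    ⟪cross a b, c⟫ =
      (a.imJ * b.imK - a.imK * b.imJ) * c.imI + (a.imK * b.imI - a.imI * b.imK) * c.imJ +
        (a.imI * b.imJ - a.imJ * b.imI) * c.imK := by
  -- Division by the quaternion `2` is real scaling, which acts coordinatewise.
  have h : cross a b = (2⁻¹ : ℝ) • (a * b - b * a) := by
    have h2 : (2 : ℍ)⁻¹ = ((2⁻¹ : ℝ) : ℍ) := by
      rw [Quaternion.coe_inv]
      rfl
    rw [cross, div_eq_mul_inv, h2, Quaternion.mul_coe_eq_smul]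
  rw [h, real_inner_smul_left, Quaternion.inner_def]
  simp only [Quaternion.re_mul, Quaternion.re_sub, Quaternion.imI_sub, Quaternion.imJ_sub,
    Quaternion.imK_sub, Quaternion.imI_mul, Quaternion.imJ_mul, Quaternion.imK_mul,
    Quaternion.re_star, Quaternion.imI_star, Quaternion.imJ_star, Quaternion.imK_star]
  ring

theorem quaternion_imaginary_gram_det (u₁ u u₂ : ℍ) :
    Matrix.det
      !![⟪u₁ - u₁.re • (1 : ℍ), u₁ - u₁.re • (1 : ℍ)⟫, ⟪u₁ - u₁.re • (1 : ℍ), u - u.re • (1 : ℍ)⟫,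
           ⟪u₁ - u₁.re • (1 : ℍ), u₂ - u₂.re • (1 : ℍ)⟫;
         ⟪u₁ - u₁.re • (1 : ℍ), u - u.re • (1 : ℍ)⟫, ⟪u - u.re • (1 : ℍ), u - u.re • (1 : ℍ)⟫,
           ⟪u - u.re • (1 : ℍ), u₂ - u₂.re • (1 : ℍ)⟫;
         ⟪u₁ - u₁.re • (1 : ℍ), u₂ - u₂.re • (1 : ℍ)⟫, ⟪u - u.re • (1 : ℍ), u₂ - u₂.re • (1 : ℍ)⟫,
           ⟪u₂ - u₂.re • (1 : ℍ), u₂ - u₂.re • (1 : ℍ)⟫] =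
      ⟪cross u₁ u, u₂⟫ ^ 2 := by
  simp only [inner_imaginary_parts, inner_cross, Matrix.det_fin_three, Matrix.of_apply,
    Matrix.cons_val]
  ring
end

section
/- For any quaternions u₁, u, u₂ over ℝ, the Gram determinant of the imaginary parts equals half the difference of the Gram determinant and the determinant of the matrix of inner products with conjugated second arguments: det G' = (det G - det H) / 2, where G = !![⟪u₁,u₁⟫, ⟪u₁,u⟫, ⟪u₁,u₂⟫; ⟪u₁,u⟫, ⟪u,u⟫, ⟪u,u₂⟫; ⟪u₁,u₂⟫, ⟪u,u₂⟫, ⟪u₂,u₂⟫], H = !![⟪u₁, star u₁⟫, ⟪u₁, star u⟫, ⟪u₁, star u₂⟫; ⟪u₁, star u⟫, ⟪u, star u⟫, ⟪u, star u₂⟫; ⟪u₁, star u₂⟫, ⟪u, star u₂⟫, ⟪u₂, star u₂⟫], and G' is the Gram matrix of the imaginary parts u₁' = u₁ - (u₁.re) • 1, u' = u - (u.re) • 1, u₂' = u₂ - (u₂.re) • 1. -/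
/-!
Let `r` be the vector of real parts and `K` the Gram matrix of the imaginary parts. Splitting
`ℍ` into real and imaginary parts gives `G = r rᵀ + K`, and conjugating the second argument
flips the sign of the imaginary contribution, so `H = r rᵀ - K`. As the size is odd,
`det H = -det (K - r rᵀ)`. The rank-one update formula
`det (K ± r rᵀ) = det K ± rᵀ (adj K) r` then gives `det G - det H = 2 det K`.
-/

open Quaternion RealInnerProductSpace Matrix

theorem inner_eq_re_add_inner_im (a b : ℍ) :
    ⟪a, b⟫ = a.re * b.re + ⟪a - a.re • (1 : ℍ), b - b.re • (1 : ℍ)⟫ := by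
  simp [Quaternion.inner_def]
  ring

theorem inner_star_eq_re_sub_inner_im (a b : ℍ) :
    ⟪a, star b⟫ = a.re * b.re - ⟪a - a.re • (1 : ℍ), b - b.re • (1 : ℍ)⟫ := by
  simp [Quaternion.inner_def]
  ring

theorem quaternion_gram_det_halfdiff (u₁ u u₂ : ℍ) :
    Matrix.det
      !![⟪u₁ - u₁.re • (1 : ℍ), u₁ - u₁.re • (1 : ℍ)⟫, ⟪u₁ - u₁.re • (1 : ℍ), u - u.re • (1 : ℍ)⟫,
           ⟪u₁ - u₁.re • (1 : ℍ), u₂ - u₂.re • (1 : ℍ)⟫;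
         ⟪u₁ - u₁.re • (1 : ℍ), u - u.re • (1 : ℍ)⟫, ⟪u - u.re • (1 : ℍ), u - u.re • (1 : ℍ)⟫,
           ⟪u - u.re • (1 : ℍ), u₂ - u₂.re • (1 : ℍ)⟫;
         ⟪u₁ - u₁.re • (1 : ℍ), u₂ - u₂.re • (1 : ℍ)⟫, ⟪u - u.re • (1 : ℍ), u₂ - u₂.re • (1 : ℍ)⟫,
           ⟪u₂ - u₂.re • (1 : ℍ), u₂ - u₂.re • (1 : ℍ)⟫] =
      (Matrix.det !![⟪u₁, u₁⟫, ⟪u₁, u⟫, ⟪u₁, u₂⟫;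
                     ⟪u₁, u⟫, ⟪u, u⟫, ⟪u, u₂⟫;
                     ⟪u₁, u₂⟫, ⟪u, u₂⟫, ⟪u₂, u₂⟫] -
       Matrix.det !![⟪u₁, star u₁⟫, ⟪u₁, star u⟫, ⟪u₁, star u₂⟫;
                     ⟪u₁, star u⟫, ⟪u, star u⟫, ⟪u, star u₂⟫;
                     ⟪u₁, star u₂⟫, ⟪u, star u₂⟫, ⟪u₂, star u₂⟫]) / 2 := by
  simp only [inner_star_eq_re_sub_inner_im]
  rw [inner_eq_re_add_inner_im u₁ u₁, inner_eq_re_add_inner_im u₁ u,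
    inner_eq_re_add_inner_im u₁ u₂, inner_eq_re_add_inner_im u u,
    inner_eq_re_add_inner_im u u₂, inner_eq_re_add_inner_im u₂ u₂]
  -- The identity is now polynomial in the real parts and the six entries of `K`.
  generalize ⟪u₁ - u₁.re • (1 : ℍ), u₁ - u₁.re • (1 : ℍ)⟫ = a
  generalize ⟪u₁ - u₁.re • (1 : ℍ), u - u.re • (1 : ℍ)⟫ = b
  generalize ⟪u₁ - u₁.re • (1 : ℍ), u₂ - u₂.re • (1 : ℍ)⟫ = c
  generalize ⟪u - u.re • (1 : ℍ), u - u.re • (1 : ℍ)⟫ = d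
  generalize ⟪u - u.re • (1 : ℍ), u₂ - u₂.re • (1 : ℍ)⟫ = e
  generalize ⟪u₂ - u₂.re • (1 : ℍ), u₂ - u₂.re • (1 : ℍ)⟫ = f
  simp only [Matrix.det_fin_three, Matrix.of_apply, Matrix.cons_val]
  ring
end
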